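/- arXiv:2004.04496 — 2 statements merged into one kernel-verified Lean document; each statement's English description precedes it below -/
import Mathlib

section
/- Let (V, E, w) be a weighted directed graph with nonnegative edge weights and let r ∈ V. Let X be a random variable with exponential distribution of rate λ > 0, and for each outcome let B(X) = {v ∈ V : dist_E(r, v) ≤ X} and E_Sep(X) = {(u, v) ∈ E : u ∈ B(X), v ∉ B(X)}. Then for every edge (u, v) ∈ E, P[(u, v) ∈ E_Sep(X)] ≤ λ · w(u, v) · P[dist_E(r, u) ≤ X]. -/
/-- A walk from `s` to `t` of length `k` using only edges in `E`,
given by its sequence of vertices `v`. -/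
def IsWalkFrom {V : Type*} (E : Set (V × V)) (s t : V) (k : ℕ) (v : ℕ → V) : Prop :=
  v 0 = s ∧ v k = t ∧ ∀ i < k, (v i, v (i + 1)) ∈ E

/-- The distance from `s` to `t`: the infimum in `ℝ≥0∞` of the weights of walks
from `s` to `t` (so `∞` if no walk exists). -/
noncomputable def wdist {V : Type*} (E : Set (V × V)) (w : V → V → ℝ) (s t : V) : ENNReal :=
  sInf {c : ENNReal | ∃ (k : ℕ) (v : ℕ → V), IsWalkFrom E s t k v ∧
    c = ENNReal.ofReal (∑ i ∈ Finset.range k, w (v i) (v (i + 1)))}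

open MeasureTheory ProbabilityTheory

/-!
The edge `(u, v)` is cut exactly when `d(u) ≤ X < d(v)`, where `d = wdist E w r`, and appending the
edge to a walk gives `d(v) ≤ d(u) + w(u, v)`. Conditioned on `a ≤ X`, where `0 ≤ a ≤ b`,
memorylessness gives `b ≤ X` with probability `exp (-λ (b - a)) ≥ 1 - λ (b - a)`.
-/

section Walk

variable {V : Type*} {E : Set (V × V)} {s t u : V} {k : ℕ} {p : ℕ → V}

theorem IsWalkFrom.update_succ (hp : IsWalkFrom E s t k p) (htu : (t, u) ∈ E) :
    IsWalkFrom E s u (k + 1) (Function.update p (k + 1) u) := by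
  obtain ⟨hstart, hend, hedge⟩ := hp
  refine ⟨by simpa using hstart, by simp, fun i hi => ?_⟩
  rcases Nat.lt_succ_iff_lt_or_eq.1 hi with hik | rfl
  · simpa [Function.update_of_ne, hi.ne, hik.ne] using hedge i hik
  · simpa [hend] using htu

theorem sum_range_update_succ {M : Type*} [AddCommMonoid M] (w : V → V → M) :
    ∑ i ∈ Finset.range (k + 1),
        w (Function.update p (k + 1) u i) (Function.update p (k + 1) u (i + 1)) =
      ∑ i ∈ Finset.range k, w (p i) (p (i + 1)) + w (p k) u := by
  rw [Finset.sum_range_succ]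
  congr 1
  · refine Finset.sum_congr rfl fun i hi => ?_
    have hik : i < k := Finset.mem_range.1 hi
    simp [hik.ne, (hik.trans k.lt_succ_self).ne]
  · simp

theorem wdist_le_of_isWalkFrom (w : V → V → ℝ) (hp : IsWalkFrom E s t k p) :
    wdist E w s t ≤ ENNReal.ofReal (∑ i ∈ Finset.range k, w (p i) (p (i + 1))) :=
  sInf_le ⟨k, p, hp, rfl⟩

theorem wdist_le_add_of_mem (w : V → V → ℝ) (s : V) (htu : (t, u) ∈ E) :
    wdist E w s u ≤ wdist E w s t + ENNReal.ofReal (w t u) := by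
  rw [wdist.eq_def E w s t, ENNReal.sInf_add]
  refine le_iInf₂ ?_
  rintro _ ⟨k, p, hp, rfl⟩
  calc wdist E w s u
      ≤ ENNReal.ofReal (∑ i ∈ Finset.range k, w (p i) (p (i + 1)) + w t u) := by
        simpa only [sum_range_update_succ, hp.2.1] using
          wdist_le_of_isWalkFrom w (hp.update_succ htu)
    _ ≤ ENNReal.ofReal (∑ i ∈ Finset.range k, w (p i) (p (i + 1))) + ENNReal.ofReal (w t u) :=
        ENNReal.ofReal_add_le

end Walk

section Exponential

open Set
open scoped ENNReal NNReal

variable {lam : ℝ}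

theorem expMeasure_real_Ici (hlam : 0 < lam) (a : ℝ) :
    (expMeasure lam).real (Ici a) = Real.exp (-(lam * max a 0)) := by
  have := isProbabilityMeasure_expMeasure hlam
  have : NullSingletonClass (expMeasure lam) := nullSingletonClass_withDensity _
  calc (expMeasure lam).real (Ici a)
      = (expMeasure lam).real (Iic a)ᶜ := by
        rw [compl_Iic, measureReal_congr Ioi_ae_eq_Ici]
    _ = 1 - cdf (expMeasure lam) a := by
        rw [probReal_compl_eq_one_sub measurableSet_Iic, cdf_eq_real]
    _ = Real.exp (-(lam * max a 0)) := by
        rw [cdf_expMeasure_eq hlam]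
        split_ifs with ha
        · rw [max_eq_left ha, sub_sub_cancel]
        · simp [max_eq_right (not_le.1 ha).le]

theorem ae_nonneg_expMeasure (hlam : 0 < lam) : ∀ᵐ x ∂expMeasure lam, 0 ≤ x := by
  have := isProbabilityMeasure_expMeasure hlam
  have hone : expMeasure lam (Ici 0) = 1 := by
    rw [← ofReal_measureReal, expMeasure_real_Ici hlam]
    simp
  exact (mem_ae_iff_prob_eq_one measurableSet_Ici).2 hone

theorem expMeasure_real_Ico_le (hlam : 0 < lam) {a b : ℝ} (hab : a ≤ b) :
    (expMeasure lam).real (Ico a b) ≤ lam * (b - a) * (expMeasure lam).real (Ici a) := by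
  have := isProbabilityMeasure_expMeasure hlam
  have hmax : max b 0 - max a 0 ≤ b - a := by
    simpa [hab] using max_sub_max_le_max b 0 a 0
  have hsplit : Real.exp (-(lam * max b 0)) =
      Real.exp (-(lam * (max b 0 - max a 0))) * Real.exp (-(lam * max a 0)) := by
    rw [← Real.exp_add]
    ring_nf
  calc (expMeasure lam).real (Ico a b)
      = (expMeasure lam).real (Ici a) - (expMeasure lam).real (Ici b) := by
        rw [← Ici_sdiff_Ici, measureReal_sdiff (Ici_subset_Ici.2 hab) measurableSet_Ici]
    _ = (1 - Real.exp (-(lam * (max b 0 - max a 0)))) * (expMeasure lam).real (Ici a) := by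
        rw [expMeasure_real_Ici hlam, expMeasure_real_Ici hlam, hsplit]
        ring
    _ ≤ lam * (max b 0 - max a 0) * (expMeasure lam).real (Ici a) := by
        gcongr
        linarith [Real.one_sub_le_exp_neg (lam * (max b 0 - max a 0))]
    _ ≤ lam * (b - a) * (expMeasure lam).real (Ici a) := by gcongr

theorem expMeasure_Ico_le (hlam : 0 < lam) (a : ℝ) (c : ℝ≥0) :
    expMeasure lam (Ico a (a + c)) ≤ ENNReal.ofReal lam * c * expMeasure lam (Ici a) := by
  have := isProbabilityMeasure_expMeasure hlam
  have h := expMeasure_real_Ico_le hlam (le_add_of_nonneg_right c.coe_nonneg : a ≤ a + c)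
  rw [add_sub_cancel_left] at h
  simpa [ENNReal.ofReal_mul, hlam.le, mul_nonneg] using ENNReal.ofReal_le_ofReal h

theorem expMeasure_preimage_ofReal_Ico_le (hlam : 0 < lam) {d d' : ℝ≥0∞} {c : ℝ≥0}
    (hd : d' ≤ d + c) :
    expMeasure lam (ENNReal.ofReal ⁻¹' Ico d d') ≤
      ENNReal.ofReal lam * c * expMeasure lam (ENNReal.ofReal ⁻¹' Ici d) := by
  induction d with
  | top => simp
  | coe a =>
    -- `ENNReal.ofReal` sends negative reals to `0`, so for `a = 0` the inclusion is only a.e.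
    have hIco : ENNReal.ofReal ⁻¹' Ico ↑a d' ≤ᵐ[expMeasure lam] Ico (a : ℝ) (a + c) := by
      filter_upwards [ae_nonneg_expMeasure hlam] with x hx hmem
      have hlt : ENNReal.ofReal x < ↑(a + c) := by
        simpa only [ENNReal.coe_add] using hmem.2.trans_le hd
      exact ⟨(Real.le_toNNReal_iff_coe_le hx).1 (ENNReal.coe_le_coe.1 hmem.1),
        (Real.toNNReal_lt_iff_lt_coe hx).1 (ENNReal.coe_lt_coe.1 hlt)⟩
    have hIci : Ici (a : ℝ) ⊆ ENNReal.ofReal ⁻¹' Ici ↑a := fun x hx => by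
      simpa using ENNReal.ofReal_le_ofReal (mem_Ici.1 hx)
    calc expMeasure lam (ENNReal.ofReal ⁻¹' Ico ↑a d')
        ≤ expMeasure lam (Ico (a : ℝ) (a + c)) := measure_mono_ae hIco
      _ ≤ ENNReal.ofReal lam * c * expMeasure lam (Ici (a : ℝ)) := expMeasure_Ico_le hlam a c
      _ ≤ ENNReal.ofReal lam * c * expMeasure lam (ENNReal.ofReal ⁻¹' Ici ↑a) := by gcongr

end Exponential

theorem prob_edge_cut_le_general
    {V : Type*} {Ω : Type*} [MeasurableSpace Ω] {P : Measure Ω}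
    {E : Set (V × V)} {w : V → V → ℝ} {r : V} {lam : ℝ} (hlam : 0 < lam)
    {X : Ω → ℝ} (hX : HasLaw X (expMeasure lam) P)
    {B : ℝ → Set V} (hB : ∀ x : ℝ, B x = {v | wdist E w r v ≤ ENNReal.ofReal x})
    {ESep : ℝ → Set (V × V)}
    (hESep : ∀ x : ℝ, ESep x = {e | e ∈ E ∧ e.1 ∈ B x ∧ e.2 ∉ B x})
    {u v : V} (huv : (u, v) ∈ E) :
    P {ω | (u, v) ∈ ESep (X ω)}
      ≤ ENNReal.ofReal (lam * w u v) * P {ω | wdist E w r u ≤ ENNReal.ofReal (X ω)} := by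
  have hcut : P {ω | (u, v) ∈ ESep (X ω)} =
      expMeasure lam (ENNReal.ofReal ⁻¹' Set.Ico (wdist E w r u) (wdist E w r v)) := by
    simp only [hESep, hB, huv, Set.mem_ofPred_eq, true_and, not_le]
    exact hX.measure_eq (ENNReal.measurable_ofReal measurableSet_Ico)
  have hball : P {ω | wdist E w r u ≤ ENNReal.ofReal (X ω)} =
      expMeasure lam (ENNReal.ofReal ⁻¹' Set.Ici (wdist E w r u)) :=
    hX.measure_eq (ENNReal.measurable_ofReal measurableSet_Ici)
  rw [hcut, hball, ENNReal.ofReal_mul hlam.le]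
  exact expMeasure_preimage_ofReal_Ico_le hlam (wdist_le_add_of_mem w r huv)

/-- Grow a ball of exponentially distributed random radius `X` (rate
`λ > 0`) around `r`, and cut the edges leaving the ball. Then for every edge `(u, v)`,
`P[(u, v) cut] ≤ λ · w(u, v) · P[dist_E(r, u) ≤ X]`. -/
theorem prob_edge_cut_le
    {V : Type*} [Fintype V] {Ω : Type*} [MeasurableSpace Ω]
    (P : Measure Ω) [IsProbabilityMeasure P]
    (E : Set (V × V)) (w : V → V → ℝ) (hw : ∀ e ∈ E, 0 ≤ w e.1 e.2) (r : V)
    (lam : ℝ) (hlam : 0 < lam)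
    (X : Ω → ℝ) (hX : Measurable X) (hXdist : P.map X = expMeasure lam)
    (B : ℝ → Set V) (hB : ∀ x : ℝ, B x = {v | wdist E w r v ≤ ENNReal.ofReal x})
    (ESep : ℝ → Set (V × V))
    (hESep : ∀ x : ℝ, ESep x = {e | e ∈ E ∧ e.1 ∈ B x ∧ e.2 ∉ B x})
    (u v : V) (huv : (u, v) ∈ E) :
    P {ω | (u, v) ∈ ESep (X ω)}
      ≤ ENNReal.ofReal (lam * w u v) * P {ω | wdist E w r u ≤ ENNReal.ofReal (X ω)} :=
  prob_edge_cut_le_general hlam ⟨hX.aemeasurable, hXdist⟩ hB hESep huv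
end

section
/- Let (V, E, w) be a weighted directed graph with nonnegative edge weights on n = |V| vertices, let 𝒱 be a partition of V, and let η ≥ 0. Suppose every part X ∈ 𝒱 has weak diameter at most |X|·η/n, i.e. for all x, y ∈ X there is a walk in G from x to y of weight at most |X|·η/n. Let Y_0, Y_1, …, Y_m ∈ 𝒱 be pairwise distinct parts, let s ∈ Y_0 and t ∈ Y_m, and for each 1 ≤ i ≤ m let (a_i, b_i) ∈ E be an edge with a_i ∈ Y_{i−1} and b_i ∈ Y_i. Then there is a walk in G from s to t of weight at most Σ_{i=1}^m w(a_i, b_i) + η. -/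
/-!
Traverse the parts in order, following the edge `(a i, b i)` from `Y (i - 1)` to `Y i` and, inside
each part, a walk of weight at most `|Y i| η / n` from the point of entry to the point of exit.
Distinct parts are disjoint, so `∑ i, |Y i| ≤ n` and the walks inside the parts cost at most `η`
altogether.
-/

section Append

variable {V M : Type*} {E : Set (V × V)} {x y z : V} {k l : ℕ} {p q : ℕ → V}

/-- The concatenation of two walks given by their vertex sequences: `p` up to index `k`, then `q`.
It is meaningful when `p k = q 0`; the shared vertex is listed once, so that walks of lengths `k`
and `l` yield one of length `k + l`. -/
def walkAppend (k : ℕ) (p q : ℕ → V) (i : ℕ) : V :=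
  if i < k then p i else q (i - k)

/-- The total weight of the first `k` steps of the vertex sequence `p`. -/
def walkWeight [AddCommMonoid M] (w : V → V → M) (k : ℕ) (p : ℕ → V) : M :=
  ∑ i ∈ Finset.range k, w (p i) (p (i + 1))

theorem walkAppend_apply_of_le (h : p k = q 0) {i : ℕ} (hi : i ≤ k) :
    walkAppend k p q i = p i := by
  obtain hlt | rfl := hi.lt_or_eq
  · exact if_pos hlt
  · simp [walkAppend, h]

theorem walkAppend_apply_add (k : ℕ) (p q : ℕ → V) (i : ℕ) :
    walkAppend k p q (k + i) = q i := by
  simp [walkAppend]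

theorem walkWeight_walkAppend [AddCommMonoid M] (w : V → V → M) (h : p k = q 0) (l : ℕ) :
    walkWeight w (k + l) (walkAppend k p q) = walkWeight w k p + walkWeight w l q := by
  unfold walkWeight
  rw [Finset.sum_range_add]
  congr 1
  · refine Finset.sum_congr rfl fun i hi => ?_
    have hik : i < k := Finset.mem_range.mp hi
    rw [walkAppend_apply_of_le h hik.le, walkAppend_apply_of_le h hik]
  · simp only [add_assoc, walkAppend_apply_add]

theorem IsWalkFrom.append (hp : IsWalkFrom E x y k p) (hq : IsWalkFrom E y z l q) :
    IsWalkFrom E x z (k + l) (walkAppend k p q) := by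
  obtain ⟨hp_start, hp_end, hp_edge⟩ := hp
  obtain ⟨hq_start, hq_end, hq_edge⟩ := hq
  have hpq : p k = q 0 := hp_end.trans hq_start.symm
  refine ⟨?_, ?_, fun i hi => ?_⟩
  · rw [walkAppend_apply_of_le hpq k.zero_le, hp_start]
  · rw [walkAppend_apply_add, hq_end]
  · obtain hik | hki := lt_or_ge i k
    · rw [walkAppend_apply_of_le hpq hik.le, walkAppend_apply_of_le hpq hik]
      exact hp_edge i hik
    · obtain ⟨j, rfl⟩ := Nat.exists_eq_add_of_le hki
      rw [add_assoc, walkAppend_apply_add, walkAppend_apply_add]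
      exact hq_edge j (by lia)

end Append

section ReachableWithin

variable {V M : Type*} [AddCommMonoid M] [Preorder M] {E : Set (V × V)} {w : V → V → M}

/-- `t` lies at distance at most `c` from `s`, in the sense that some walk from `s` to `t` in `E`
has weight at most `c`. -/
def ReachableWithin (E : Set (V × V)) (w : V → V → M) (s t : V) (c : M) : Prop :=
  ∃ (k : ℕ) (p : ℕ → V), IsWalkFrom E s t k p ∧ walkWeight w k p ≤ c

/-- `X` has weak diameter at most `d`: any two of its points are joined by a walk of weight at most
`d`, which is allowed to leave `X`. -/
def HasWeakDiamLE (E : Set (V × V)) (w : V → V → M) (X : Set V) (d : M) : Prop :=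
  ∀ x ∈ X, ∀ y ∈ X, ReachableWithin E w x y d

theorem ReachableWithin.mono {s t : V} {c d : M} (h : ReachableWithin E w s t c) (hcd : c ≤ d) :
    ReachableWithin E w s t d := by
  obtain ⟨k, p, hp, hpc⟩ := h
  exact ⟨k, p, hp, hpc.trans hcd⟩

theorem ReachableWithin.of_edge {x y : V} (h : (x, y) ∈ E) : ReachableWithin E w x y (w x y) := by
  refine ⟨1, fun i => if i = 0 then x else y, ⟨rfl, rfl, fun i hi => ?_⟩, ?_⟩
  · obtain rfl := Nat.lt_one_iff.mp hi
    exact h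
  · simp [walkWeight]

variable [IsOrderedAddMonoid M]

theorem ReachableWithin.trans {x y z : V} {c d : M} (hxy : ReachableWithin E w x y c)
    (hyz : ReachableWithin E w y z d) : ReachableWithin E w x z (c + d) := by
  obtain ⟨k, p, hp, hpc⟩ := hxy
  obtain ⟨l, q, hq, hqd⟩ := hyz
  refine ⟨k + l, walkAppend k p q, hp.append hq, ?_⟩
  rw [walkWeight_walkAppend w (hp.2.1.trans hq.1.symm)]
  exact add_le_add hpc hqd

theorem ReachableWithin.of_chain {Y : ℕ → Set V} {d : ℕ → M} {a b : ℕ → V} {m : ℕ} {s t : V}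
    (hdiam : ∀ i ≤ m, HasWeakDiamLE E w (Y i) (d i))
    (hab : ∀ i, 1 ≤ i → i ≤ m → (a i, b i) ∈ E ∧ a i ∈ Y (i - 1) ∧ b i ∈ Y i)
    (hs : s ∈ Y 0) (ht : t ∈ Y m) :
    ReachableWithin E w s t
      (∑ i ∈ Finset.Icc 1 m, w (a i) (b i) + ∑ i ∈ Finset.range (m + 1), d i) := by
  induction m generalizing t with
  | zero => simpa using hdiam 0 le_rfl s hs t ht
  | succ m ih =>
    obtain ⟨h_edge, ha, hb⟩ := hab (m + 1) m.succ_pos le_rfl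
    have to_exit : ReachableWithin E w s (a (m + 1))
        (∑ i ∈ Finset.Icc 1 m, w (a i) (b i) + ∑ i ∈ Finset.range (m + 1), d i) :=
      ih (fun i hi => hdiam i (by lia)) (fun i h1 hi => hab i h1 (by lia)) ha
    have inside_last : ReachableWithin E w (b (m + 1)) t (d (m + 1)) :=
      hdiam (m + 1) le_rfl _ hb t ht
    rw [Finset.sum_Icc_succ_top m.succ_pos, Finset.sum_range_succ d, add_add_add_comm, ← add_assoc]
    exact (to_exit.trans (.of_edge h_edge)).trans inside_last

end ReachableWithin

section DisjointSets

variable {ι V : Type*} {s : Finset ι} {Y : ι → Set V}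

theorem sum_ncard_le_card [Finite V] (hY : (s : Set ι).PairwiseDisjoint Y) :
    ∑ i ∈ s, (Y i).ncard ≤ Nat.card V :=
  calc ∑ i ∈ s, (Y i).ncard
      = (⋃ i ∈ (s : Set ι), Y i).ncard := by
        rw [s.finite_toSet.ncard_biUnion (fun i _ => (Y i).toFinite) hY, finsum_mem_coe_finset]
    _ ≤ Nat.card V := Set.ncard_le_card _

theorem sum_ncard_mul_div_card_le [Fintype V] {K : Type*} [Semifield K] [LinearOrder K]
    [IsStrictOrderedRing K] (hY : (s : Set ι).PairwiseDisjoint Y) {η : K} (hη : 0 ≤ η) :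
    ∑ i ∈ s, ((Y i).ncard : K) * η / (Fintype.card V : K) ≤ η := by
  have hcard : ∑ i ∈ s, ((Y i).ncard : K) ≤ Fintype.card V := by
    exact_mod_cast (sum_ncard_le_card hY).trans_eq Nat.card_eq_fintype_card
  rw [← Finset.sum_div, ← Finset.sum_mul]
  refine div_le_of_le_mul₀ (Nat.cast_nonneg _) hη ?_
  rw [mul_comm η]
  exact mul_le_mul_of_nonneg_right hcard hη

end DisjointSets

theorem walk_through_low_diameter_parts_general {V K : Type*} [Fintype V] [Semifield K]
    [LinearOrder K] [IsStrictOrderedRing K] {E : Set (V × V)} {w : V → V → K} {η : K} (hη : 0 ≤ η)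
    {m : ℕ} {Y : ℕ → Set V} (hdisj : (Set.Iic m).PairwiseDisjoint Y)
    (hdiam : ∀ i ≤ m, HasWeakDiamLE E w (Y i) ((Y i).ncard * η / Fintype.card V))
    {s t : V} (hs : s ∈ Y 0) (ht : t ∈ Y m) {a b : ℕ → V}
    (hab : ∀ i, 1 ≤ i → i ≤ m → (a i, b i) ∈ E ∧ a i ∈ Y (i - 1) ∧ b i ∈ Y i) :
    ReachableWithin E w s t (∑ i ∈ Finset.Icc 1 m, w (a i) (b i) + η) := by
  have hdisj_range : (Finset.range (m + 1) : Set ℕ).PairwiseDisjoint Y :=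
    hdisj.subset fun i hi => Nat.le_of_lt_succ (Finset.mem_range.mp hi)
  refine (ReachableWithin.of_chain hdiam hab hs ht).mono ?_
  gcongr
  exact sum_ncard_mul_div_card_le hdisj_range hη

/-- Suppose every part `X` of the partition `𝒱` has weak diameter at
most `|X| η / n`. If `Y_0, …, Y_m` are pairwise distinct parts, `s ∈ Y_0`, `t ∈ Y_m`,
and `(a_i, b_i)` is an edge with `a_i ∈ Y_{i-1}` and `b_i ∈ Y_i` for `1 ≤ i ≤ m`, then
there is a walk from `s` to `t` of weight at most `Σ_{i=1}^m w(a_i, b_i) + η`. -/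
theorem walk_through_low_diameter_parts
    {V : Type*} [Fintype V] (E : Set (V × V)) (w : V → V → ℝ)
    (hw : ∀ e ∈ E, 0 ≤ w e.1 e.2)
    (𝒱 : Set (Set V)) (hpart : Setoid.IsPartition 𝒱)
    (η : ℝ) (hη : 0 ≤ η)
    (hdiam : ∀ X ∈ 𝒱, ∀ x ∈ X, ∀ y ∈ X,
      ∃ (k : ℕ) (p : ℕ → V), IsWalkFrom E x y k p ∧
        (∑ i ∈ Finset.range k, w (p i) (p (i + 1)))
          ≤ (X.ncard : ℝ) * η / (Fintype.card V : ℝ))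
    (m : ℕ) (Y : ℕ → Set V) (hY : ∀ i ≤ m, Y i ∈ 𝒱)
    (hdistinct : ∀ i ≤ m, ∀ j ≤ m, i ≠ j → Y i ≠ Y j)
    (s t : V) (hs : s ∈ Y 0) (ht : t ∈ Y m)
    (a b : ℕ → V)
    (hab : ∀ i, 1 ≤ i → i ≤ m → (a i, b i) ∈ E ∧ a i ∈ Y (i - 1) ∧ b i ∈ Y i) :
    ∃ (k : ℕ) (p : ℕ → V), IsWalkFrom E s t k p ∧
      (∑ i ∈ Finset.range k, w (p i) (p (i + 1)))
        ≤ (∑ i ∈ Finset.Icc 1 m, w (a i) (b i)) + η :=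
  walk_through_low_diameter_parts_general hη
    (fun i hi j hj hij => hpart.pairwiseDisjoint (hY i hi) (hY j hj) (hdistinct i hi j hj hij))
    (fun i hi => hdiam (Y i) (hY i hi)) hs ht hab
end
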